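/- Let k ≥ 1, d ∈ (1/2 − 1/(2k), 1/2), β ≠ 0 with −k(d−1) − k/2 − 1 < β < −k(d−1) − k/2, and for λ > 0, t > 0 set h_t^{λ,β}(x) = ∫_ℝ l_t^β(s) ∏_{i=1}^k (s−x_i)_+^{d−1} e^{−λ(s−x_i)_+} ds where l_t^β(s) = ((t−s)_+^β − (−s)_+^β)/β. Then ∫_{ℝ^k} h_t^{λ,β}(x)² dx = t^{2β + 2 + k(2d−1)} · Φ(λ t), where Φ(μ) = ∫_ℝ ∫_ℝ l_1^β(u) l_1^β(v) · e^{−μ k |u−v|} · |u−v|^{k(2d−1)} · ( ∫_0^∞ y^{d−1} (1+y)^{d−1} e^{−2μ|u−v| y} dy )^k du dv. -/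

import Mathlib

open MeasureTheory Real Set

/-- The fractional filter `l_t^β(s) = ((t−s)₊^β − (−s)₊^β)/β`. -/
noncomputable def ell (t b s : ℝ) : ℝ :=
  ((max (t - s) 0) ^ b - (max (-s) 0) ^ b) / b

/-- The fractionally filtered tempered Hermite kernel
`h_t^{λ,β}(x) = ∫_ℝ l_t^β(s) ∏ᵢ (s−xᵢ)₊^{d−1} e^{−λ(s−xᵢ)₊} ds`. -/
noncomputable def tHermiteFiltKernel (k : ℕ) (d lam b t : ℝ) (x : Fin k → ℝ) : ℝ :=
  ∫ s : ℝ, ell t b s *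
    ∏ i, ((max (s - x i) 0) ^ (d - 1) * Real.exp (-lam * max (s - x i) 0))

/-- `Φ(μ)` from the variance scaling identity. -/
noncomputable def Phi (k : ℕ) (d b μ : ℝ) : ℝ :=
  ∫ u : ℝ, ∫ v : ℝ,
    ell 1 b u * ell 1 b v * Real.exp (-μ * (k : ℝ) * |u - v|) *
      |u - v| ^ ((k : ℝ) * (2 * d - 1)) *
      (∫ y in Set.Ioi (0 : ℝ),
        y ^ (d - 1) * (1 + y) ^ (d - 1) * Real.exp (-2 * μ * |u - v| * y)) ^ k

/-
Expanding the square and using Tonelli, the second moment is the double integral of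
`l_t(s) l_t(r) γ(s - r)^k`, where `γ` is the autocovariance of `g(z) = z₊^(d-1) e^(-λ z₊)`. For
`r < s` the substitution `x = r - (s - r) y` gives the closed form
`γ(w) = |w|^(2d-1) e^(-λ|w|) ∫₀^∞ y^(d-1) (1+y)^(d-1) e^(-2λ|w|y) dy`, and scaling `s = tu`,
`r = tv` produces the power of `t`.

For the absolute convergence behind Fubini, `γ(w)^k` is at most a constant times the Riesz kernel
`|w|^c`, `c = k(2d-1) ∈ (-1, 0)`. Since `|w|^c` is itself an autocovariance, functions of finite
Riesz energy are closed under sums. Now `|l_t|` is dominated by `u ↦ u^β` truncated near its two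
singularities plus a tail of order `u^(β-1)`, and these have finite energy exactly when
`-1 - c/2 < β < -c/2`.
-/

open scoped ENNReal

section Fubini

variable {S X : Type*} [MeasurableSpace S] [MeasurableSpace X] {σ : Measure S} {μ : Measure X}
  [SFinite σ] [SFinite μ]

lemma lintegral_sq_lintegral {G : S → X → ℝ≥0∞} (hG : Measurable (Function.uncurry G)) :
    ∫⁻ x, (∫⁻ s, G s x ∂σ) ^ 2 ∂μ = ∫⁻ s, ∫⁻ r, ∫⁻ x, G s x * G r x ∂μ ∂σ ∂σ := by
  have hGx (x : X) : AEMeasurable (fun s => G s x) σ :=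
    (hG.comp measurable_prodMk_right).aemeasurable
  have hF : Measurable fun q : X × (S × S) => G q.2.1 q.1 * G q.2.2 q.1 := by fun_prop
  calc ∫⁻ x, (∫⁻ s, G s x ∂σ) ^ 2 ∂μ
      = ∫⁻ x, ∫⁻ p, G p.1 x * G p.2 x ∂(σ.prod σ) ∂μ := by
        simp_rw [sq, ← lintegral_prod_mul (hGx _) (hGx _)]
    _ = ∫⁻ p, ∫⁻ x, G p.1 x * G p.2 x ∂μ ∂(σ.prod σ) := lintegral_lintegral_swap hF.aemeasurable
    _ = ∫⁻ s, ∫⁻ r, ∫⁻ x, G s x * G r x ∂μ ∂σ ∂σ :=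
        lintegral_prod _ hF.lintegral_prod_left'.aemeasurable

lemma integral_sq_integral {G : S → X → ℝ} (hG : Measurable (Function.uncurry G))
    (hfin : ∫⁻ s, ∫⁻ r, ∫⁻ x, ‖G s x‖ₑ * ‖G r x‖ₑ ∂μ ∂σ ∂σ < ∞) :
    ∫ x, (∫ s, G s x ∂σ) ^ 2 ∂μ = ∫ s, ∫ r, ∫ x, G s x * G r x ∂μ ∂σ ∂σ := by
  have hF : Measurable fun q : X × (S × S) => G q.2.1 q.1 * G q.2.2 q.1 := by fun_prop
  have hInt : Integrable (fun q : X × (S × S) => G q.2.1 q.1 * G q.2.2 q.1)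
      (μ.prod (σ.prod σ)) := by
    refine ⟨hF.aestronglyMeasurable, ?_⟩
    rw [HasFiniteIntegral, lintegral_prod_symm' _ hF.enorm,
      lintegral_prod _ hF.enorm.lintegral_prod_left'.aemeasurable]
    simpa only [enorm_mul] using hfin
  calc ∫ x, (∫ s, G s x ∂σ) ^ 2 ∂μ
      = ∫ x, ∫ p, G p.1 x * G p.2 x ∂(σ.prod σ) ∂μ := by
        simp_rw [sq, ← integral_prod_mul]
    _ = ∫ p, ∫ x, G p.1 x * G p.2 x ∂μ ∂(σ.prod σ) := integral_integral_swap hInt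
    _ = ∫ s, ∫ r, ∫ x, G s x * G r x ∂μ ∂σ ∂σ := integral_prod _ hInt.integral_prod_right

end Fubini

section BetaIntegrals

variable {p q c : ℝ}

lemma integrableOn_Ioi_rpow_mul_one_add_rpow (hp : -1 < p) (hpq : p + q < -1) :
    IntegrableOn (fun y : ℝ => y ^ p * (1 + y) ^ q) (Ioi 0) := by
  have hmeas : Measurable fun y : ℝ => y ^ p * (1 + y) ^ q := by fun_prop
  rw [← Ioc_union_Ioi_eq_Ioi zero_le_one, integrableOn_union]
  constructor
  · have hdom : IntegrableOn (fun y : ℝ => y ^ p) (Ioc 0 1) := by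
      rw [integrableOn_Ioc_iff_integrableOn_Ioo]
      exact (intervalIntegral.integrableOn_Ioo_rpow_iff one_pos).2 hp
    refine Integrable.mono' hdom hmeas.aestronglyMeasurable ?_
    filter_upwards [ae_restrict_mem measurableSet_Ioc] with y hy
    have hy0 : 0 < y := hy.1
    rw [Real.norm_of_nonneg (by positivity)]
    exact mul_le_of_le_one_right (by positivity)
      (Real.rpow_le_one_of_one_le_of_nonpos (by linarith) (by linarith))
  · refine Integrable.mono' (integrableOn_Ioi_rpow_of_lt hpq one_pos)
      hmeas.aestronglyMeasurable ?_
    filter_upwards [ae_restrict_mem measurableSet_Ioi] with y hy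
    have hy0 : 0 < y := one_pos.trans hy
    rw [Real.norm_of_nonneg (by positivity), Real.rpow_add hy0]
    gcongr ?_ * ?_
    exact Real.rpow_le_rpow_of_nonpos hy0 (by linarith) (by linarith)

lemma integrableOn_Ioo_rpow_mul_one_sub_rpow (hp : -1 < p) (hc : -1 < c) :
    IntegrableOn (fun w : ℝ => w ^ p * (1 - w) ^ c) (Ioo 0 1) := by
  have hbeta := Complex.betaIntegral_convergent (u := (p + 1 : ℝ)) (v := (c + 1 : ℝ))
    (by simpa using by linarith) (by simpa using by linarith)
  rw [intervalIntegrable_iff_integrableOn_Ioo_of_le zero_le_one] at hbeta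
  refine IntegrableOn.congr_fun (Integrable.norm hbeta) (fun w hw => ?_) measurableSet_Ioo
  have hw' : 0 < 1 - w := sub_pos.2 hw.2
  simp only [norm_mul]
  rw [show (1 : ℂ) - w = (1 - w : ℝ) by push_cast; rfl,
    Complex.norm_cpow_eq_rpow_re_of_pos hw.1, Complex.norm_cpow_eq_rpow_re_of_pos hw']
  simp

lemma integrableOn_Ioi_rpow_mul_abs_one_sub_rpow (hp : -1 < p) (hc : -1 < c) (hpc : p + c < -1) :
    IntegrableOn (fun w : ℝ => w ^ p * |1 - w| ^ c) (Ioi 0) := by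
  rw [← Ioc_union_Ioi_eq_Ioi zero_le_one, integrableOn_union]
  constructor
  · rw [integrableOn_Ioc_iff_integrableOn_Ioo]
    refine (integrableOn_Ioo_rpow_mul_one_sub_rpow hp hc).congr_fun (fun w hw => ?_)
      measurableSet_Ioo
    simp only [abs_of_pos (sub_pos.2 hw.2)]
  · have hshift := (measurePreserving_sub_right volume (1 : ℝ)).integrableOn_comp_preimage
      (measurableEmbedding_subRight 1) |>.2
      (integrableOn_Ioi_rpow_mul_one_add_rpow (q := p) hc (by linarith))
    rw [preimage_sub_const_Ioi, zero_add] at hshift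
    refine hshift.congr_fun (fun w hw => ?_) measurableSet_Ioi
    simp only [Function.comp_apply, add_sub_cancel, abs_sub_comm (1 : ℝ) w,
      abs_of_pos (sub_pos.2 (mem_Ioi.1 hw)), mul_comm]

end BetaIntegrals

section TemperedKernel

/-- The tempered fractional kernel `z₊^(d-1) e^(-λ z₊)`, the factor of `tHermiteFiltKernel` in each
coordinate. It vanishes for `z ≤ 0`, except that `0 ^ 0 = 1` makes it `1` there when `d = 1`. -/
noncomputable def temperedKernel (d lam z : ℝ) : ℝ :=
  max z 0 ^ (d - 1) * Real.exp (-lam * max z 0)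

/-- The inner integral of `Phi`, as a function of `a = μ|u - v|`; at `a = 0` it is the Beta value
`B(d, 1 - 2d)`. -/
noncomputable def temperedBeta (d a : ℝ) : ℝ :=
  ∫ y in Ioi (0 : ℝ), y ^ (d - 1) * (1 + y) ^ (d - 1) * Real.exp (-2 * a * y)

/-- The autocovariance `w ↦ ∫ g(w + x) g(x) dx` of `g = temperedKernel d lam` in closed form
for `w ≠ 0`; see `integral_temperedKernel_mul`. -/
noncomputable def temperedCov (d lam w : ℝ) : ℝ :=
  |w| ^ (2 * d - 1) * Real.exp (-lam * |w|) * temperedBeta d (lam * |w|)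

variable {d lam a : ℝ}

lemma temperedKernel_nonneg (d lam z : ℝ) : 0 ≤ temperedKernel d lam z := by
  unfold temperedKernel; positivity

@[fun_prop]
lemma measurable_temperedKernel (d lam : ℝ) : Measurable (temperedKernel d lam) := by
  unfold temperedKernel; fun_prop

lemma temperedKernel_of_nonpos (hd : d ≠ 1) {z : ℝ} (hz : z ≤ 0) : temperedKernel d lam z = 0 := by
  rw [temperedKernel, max_eq_right hz, Real.zero_rpow (sub_ne_zero.2 hd), zero_mul]

lemma temperedKernel_mul_of_pos (ha : 0 < a) {y : ℝ} (hy : 0 < y) :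
    temperedKernel d lam (a + a * y) * temperedKernel d lam (a * y) =
      a ^ (2 * d - 2) * Real.exp (-lam * a) *
        (y ^ (d - 1) * (1 + y) ^ (d - 1) * Real.exp (-2 * (lam * a) * y)) := by
  have hpow : a ^ (2 * d - 2) = a ^ (d - 1) * a ^ (d - 1) := by rw [← Real.rpow_add ha]; ring_nf
  have hexp : Real.exp (-lam * (a * (1 + y))) * Real.exp (-lam * (a * y)) =
      Real.exp (-lam * a) * Real.exp (-2 * (lam * a) * y) := by
    rw [← Real.exp_add, ← Real.exp_add]; ring_nf
  rw [temperedKernel, temperedKernel, show a + a * y = a * (1 + y) by ring,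
    max_eq_left (by positivity), max_eq_left (by positivity), Real.mul_rpow ha.le (by positivity),
    Real.mul_rpow ha.le hy.le, hpow]
  linear_combination (a ^ (d - 1) * a ^ (d - 1) * (1 + y) ^ (d - 1) * y ^ (d - 1)) * hexp

lemma temperedKernel_mul_eq_indicator (hd : d ≠ 1) (ha : 0 < a) :
    (fun y => temperedKernel d lam (a + a * y) * temperedKernel d lam (a * y)) =
      (Ioi 0).indicator fun y => a ^ (2 * d - 2) * Real.exp (-lam * a) *
        (y ^ (d - 1) * (1 + y) ^ (d - 1) * Real.exp (-2 * (lam * a) * y)) := by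
  funext y
  rcases lt_or_ge 0 y with hy | hy
  · rw [indicator_of_mem (mem_Ioi.2 hy), temperedKernel_mul_of_pos ha hy]
  · rw [indicator_of_notMem (notMem_Ioi.2 hy),
      temperedKernel_of_nonpos hd (mul_nonpos_of_nonneg_of_nonpos ha.le hy), mul_zero]

lemma mul_exp_neg_two_mul_le (d : ℝ) (ha : 0 ≤ a) {y : ℝ} (hy : 0 < y) :
    y ^ (d - 1) * (1 + y) ^ (d - 1) * Real.exp (-2 * a * y) ≤ y ^ (d - 1) * (1 + y) ^ (d - 1) := by
  have hay : 0 ≤ a * y := by positivity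
  exact mul_le_of_le_one_right (by positivity) (Real.exp_le_one_iff.2 (by linarith))

lemma integrableOn_temperedBeta (hd₀ : 0 < d) (hd : d < 1 / 2) (ha : 0 ≤ a) :
    IntegrableOn (fun y : ℝ => y ^ (d - 1) * (1 + y) ^ (d - 1) * Real.exp (-2 * a * y))
      (Ioi 0) := by
  refine Integrable.mono' (integrableOn_Ioi_rpow_mul_one_add_rpow (p := d - 1) (q := d - 1)
    (by linarith) (by linarith)) (by fun_prop) ?_
  filter_upwards [ae_restrict_mem measurableSet_Ioi] with y hy
  have hy₀ : 0 < y := hy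
  rw [Real.norm_of_nonneg (by positivity)]
  exact mul_exp_neg_two_mul_le d ha hy₀

lemma temperedBeta_nonneg (d a : ℝ) : 0 ≤ temperedBeta d a := by
  refine setIntegral_nonneg measurableSet_Ioi fun y (hy : 0 < y) => ?_
  positivity

lemma temperedBeta_pos (hd₀ : 0 < d) (hd : d < 1 / 2) (ha : 0 ≤ a) : 0 < temperedBeta d a := by
  have hpos (y : ℝ) (hy : 0 < y) :
      0 < y ^ (d - 1) * (1 + y) ^ (d - 1) * Real.exp (-2 * a * y) := by positivity
  refine (setIntegral_pos_iff_support_of_nonneg_ae ?_ (integrableOn_temperedBeta hd₀ hd ha)).2 ?_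
  · filter_upwards [ae_restrict_mem measurableSet_Ioi] with y hy using (hpos y hy).le
  · have hsub : Ioi 0 ⊆ Function.support
        fun y : ℝ => y ^ (d - 1) * (1 + y) ^ (d - 1) * Real.exp (-2 * a * y) :=
      fun y hy => (hpos y hy).ne'
    rw [inter_eq_right.2 hsub, Real.volume_Ioi]
    exact ENNReal.zero_lt_top

lemma temperedBeta_le_zero (hd₀ : 0 < d) (hd : d < 1 / 2) (ha : 0 ≤ a) :
    temperedBeta d a ≤ temperedBeta d 0 := by
  refine setIntegral_mono_on (integrableOn_temperedBeta hd₀ hd ha)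
    (integrableOn_temperedBeta hd₀ hd le_rfl) measurableSet_Ioi fun y hy => ?_
  simpa using mul_exp_neg_two_mul_le d ha hy

lemma temperedCov_neg (d lam w : ℝ) : temperedCov d lam (-w) = temperedCov d lam w := by
  simp only [temperedCov, abs_neg]

lemma temperedCov_zero_left (d w : ℝ) :
    temperedCov d 0 w = |w| ^ (2 * d - 1) * temperedBeta d 0 := by
  simp [temperedCov]

lemma temperedCov_mul (ha : 0 ≤ a) (d lam w : ℝ) :
    temperedCov d lam (a * w) = a ^ (2 * d - 1) * temperedCov d (lam * a) w := by
  rw [temperedCov, temperedCov, abs_mul, abs_of_nonneg ha, Real.mul_rpow ha (abs_nonneg w)]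
  ring_nf

lemma temperedCov_pow (k : ℕ) (d lam w : ℝ) :
    temperedCov d lam w ^ k = Real.exp (-lam * k * |w|) * |w| ^ ((k : ℝ) * (2 * d - 1)) *
      temperedBeta d (lam * |w|) ^ k := by
  rw [temperedCov, mul_pow, mul_pow, ← Real.exp_nat_mul, ← Real.rpow_mul_natCast (abs_nonneg w)]
  ring_nf

lemma temperedCov_pow_le (k : ℕ) (hd₀ : 0 < d) (hd : d < 1 / 2) (hlam : 0 ≤ lam) (w : ℝ) :
    temperedCov d lam w ^ k ≤ temperedBeta d 0 ^ k * |w| ^ ((k : ℝ) * (2 * d - 1)) := by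
  have hexp : Real.exp (-lam * k * |w|) ≤ 1 := by
    rw [Real.exp_le_one_iff, neg_mul, neg_mul, neg_nonpos]
    positivity
  rw [temperedCov_pow, mul_comm (temperedBeta d 0 ^ k)]
  gcongr
  · exact pow_nonneg (temperedBeta_nonneg d _) k
  · exact mul_le_of_le_one_left (by positivity) hexp
  · exact temperedBeta_nonneg d _
  · exact temperedBeta_le_zero hd₀ hd (by positivity)

lemma integrable_temperedKernel_mul (hd₀ : 0 < d) (hd : d < 1 / 2) (hlam : 0 ≤ lam) {s r : ℝ}
    (hrs : r ≠ s) :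
    Integrable fun x => temperedKernel d lam (s - x) * temperedKernel d lam (r - x) := by
  wlog hlt : r < s generalizing s r
  · simpa only [mul_comm] using this hrs.symm (lt_of_le_of_ne (not_lt.1 hlt) hrs.symm)
  have ha : 0 < s - r := sub_pos.2 hlt
  have hscaled : Integrable fun y =>
      temperedKernel d lam (s - r + (s - r) * y) * temperedKernel d lam ((s - r) * y) := by
    rw [temperedKernel_mul_eq_indicator (by linarith) ha,
      integrable_indicator_iff measurableSet_Ioi]
    exact (integrableOn_temperedBeta hd₀ hd (by positivity)).const_mul _
  have hshift := ((integrable_comp_mul_left_iff (fun z =>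
    temperedKernel d lam (s - r + z) * temperedKernel d lam z) ha.ne').1 hscaled).comp_sub_left r
  simpa only [sub_add_sub_cancel] using hshift

lemma integral_temperedKernel_mul (hd : d ≠ 1) {s r : ℝ} (hrs : r ≠ s) :
    ∫ x, temperedKernel d lam (s - x) * temperedKernel d lam (r - x) =
      temperedCov d lam (s - r) := by
  wlog hlt : r < s generalizing s r
  · simpa only [mul_comm, ← temperedCov_neg d lam (s - r), neg_sub] using
      this hrs.symm (lt_of_le_of_ne (not_lt.1 hlt) hrs.symm)
  have ha : 0 < s - r := sub_pos.2 hlt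
  set F : ℝ → ℝ := fun z => temperedKernel d lam (s - r + z) * temperedKernel d lam z with hF
  calc ∫ x, temperedKernel d lam (s - x) * temperedKernel d lam (r - x)
      = ∫ x, F (r - x) := by simp only [hF, sub_add_sub_cancel]
    _ = ∫ z, F z := integral_sub_left_eq_self F volume r
    _ = (s - r) * ∫ y, F ((s - r) * y) := by
        rw [Measure.integral_comp_mul_left, abs_of_pos (inv_pos.2 ha), smul_eq_mul,
          mul_inv_cancel_left₀ ha.ne']
    _ = (s - r) * ((s - r) ^ (2 * d - 2) * Real.exp (-lam * (s - r)) *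
          temperedBeta d (lam * (s - r))) := by
        rw [hF, temperedKernel_mul_eq_indicator hd ha, integral_indicator measurableSet_Ioi,
          integral_const_mul, temperedBeta]
    _ = temperedCov d lam (s - r) := by
        rw [temperedCov, abs_of_pos ha, show 2 * d - 1 = 2 * d - 2 + 1 by ring,
          Real.rpow_add_one ha.ne']
        ring

lemma lintegral_temperedKernel_mul (hd₀ : 0 < d) (hd : d < 1 / 2) (hlam : 0 ≤ lam) {s r : ℝ}
    (hrs : r ≠ s) :
    ∫⁻ x, ENNReal.ofReal (temperedKernel d lam (s - x)) *
        ENNReal.ofReal (temperedKernel d lam (r - x)) =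
      ENNReal.ofReal (temperedCov d lam (s - r)) := by
  rw [← integral_temperedKernel_mul (by linarith) hrs, ofReal_integral_eq_lintegral_ofReal
    (integrable_temperedKernel_mul hd₀ hd hlam hrs)
    (ae_of_all _ fun x => mul_nonneg (temperedKernel_nonneg ..) (temperedKernel_nonneg ..))]
  simp only [ENNReal.ofReal_mul (temperedKernel_nonneg ..)]

end TemperedKernel

section RieszEnergy

/-- The Riesz energy `∬ f(s) f(r) |s - r|^c ds dr` of a nonnegative function on the line. -/
noncomputable def rieszEnergy (c : ℝ) (f : ℝ → ℝ≥0∞) : ℝ≥0∞ :=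
  ∫⁻ s, ∫⁻ r, f s * f r * ENNReal.ofReal (|s - r| ^ c)

/-- The power function `u ↦ u ^ p` cut off outside `S`, the model for the singularities and the
tail of `ell`. -/
noncomputable def truncRpow (S : Set ℝ) (p u : ℝ) : ℝ≥0∞ :=
  S.indicator (fun u => ENNReal.ofReal (u ^ p)) u

variable {c p : ℝ} {S : Set ℝ} {f g : ℝ → ℝ≥0∞}

lemma rieszEnergy_lt_top_of_le_mul {C : ℝ≥0∞} (hC : C ≠ ∞) (hfg : ∀ s, f s ≤ C * g s)
    (hg : rieszEnergy c g < ∞) : rieszEnergy c f < ∞ := by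
  calc rieszEnergy c f
      ≤ ∫⁻ s, ∫⁻ r, C ^ 2 * (g s * g r * ENNReal.ofReal (|s - r| ^ c)) := by
        refine lintegral_mono fun s => lintegral_mono fun r => ?_
        calc f s * f r * ENNReal.ofReal (|s - r| ^ c)
            ≤ C * g s * (C * g r) * ENNReal.ofReal (|s - r| ^ c) := by gcongr <;> apply hfg
          _ = C ^ 2 * (g s * g r * ENNReal.ofReal (|s - r| ^ c)) := by ring
    _ = C ^ 2 * rieszEnergy c g := by
        simp_rw [lintegral_const_mul' _ _ (ENNReal.pow_ne_top hC), rieszEnergy]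
    _ < ∞ := ENNReal.mul_lt_top (ENNReal.pow_lt_top hC.lt_top) hg

lemma rieszEnergy_comp_sub_left (c a : ℝ) (f : ℝ → ℝ≥0∞) :
    rieszEnergy c (fun s => f (a - s)) = rieszEnergy c f := by
  have hinner (s : ℝ) : ∫⁻ r, f (a - s) * f (a - r) * ENNReal.ofReal (|s - r| ^ c) =
      ∫⁻ v, f (a - s) * f v * ENNReal.ofReal (|(a - s) - v| ^ c) := by
    rw [← lintegral_sub_left_eq_self
      (fun v => f (a - s) * f v * ENNReal.ofReal (|(a - s) - v| ^ c)) a]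
    simp only [sub_sub_sub_cancel_left, abs_sub_comm s]
  simp_rw [rieszEnergy, hinner]
  exact lintegral_sub_left_eq_self
    (fun u => ∫⁻ v, f u * f v * ENNReal.ofReal (|u - v| ^ c)) a

-- Positive definiteness of the Riesz kernel: up to a constant, `|w|^c` is the autocovariance of
-- `x₊^((c-1)/2)`.
lemma temperedBeta_mul_rieszEnergy (hc : -1 < c) (hc₀ : c < 0) (hf : Measurable f) :
    ENNReal.ofReal (temperedBeta ((1 + c) / 2) 0) * rieszEnergy c f =
      ∫⁻ x, (∫⁻ s, f s * ENNReal.ofReal (temperedKernel ((1 + c) / 2) 0 (s - x))) ^ 2 := by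
  set d := (1 + c) / 2 with hd
  rw [lintegral_sq_lintegral (by fun_prop), rieszEnergy,
    ← lintegral_const_mul' _ _ ENNReal.ofReal_ne_top]
  refine lintegral_congr fun s => ?_
  rw [← lintegral_const_mul' _ _ ENNReal.ofReal_ne_top]
  refine lintegral_congr_ae ?_
  filter_upwards [(volume : Measure ℝ).ae_ne s] with r hrs
  calc ENNReal.ofReal (temperedBeta d 0) * (f s * f r * ENNReal.ofReal (|s - r| ^ c))
      = f s * f r * ENNReal.ofReal (temperedCov d 0 (s - r)) := by
        rw [temperedCov_zero_left, show 2 * d - 1 = c by rw [hd]; ring,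
          ENNReal.ofReal_mul (by positivity)]
        ring
    _ = ∫⁻ x, f s * f r * (ENNReal.ofReal (temperedKernel d 0 (s - x)) *
          ENNReal.ofReal (temperedKernel d 0 (r - x))) := by
        rw [lintegral_const_mul _ (by fun_prop), lintegral_temperedKernel_mul (by linarith)
          (by linarith) le_rfl hrs]
    _ = _ := lintegral_congr fun x => by ring

lemma rieszEnergy_add_lt_top (hc : -1 < c) (hc₀ : c < 0) (hf : Measurable f) (hg : Measurable g)
    (hfE : rieszEnergy c f < ∞) (hgE : rieszEnergy c g < ∞) :
    rieszEnergy c (fun s => f s + g s) < ∞ := by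
  set B := ENNReal.ofReal (temperedBeta ((1 + c) / 2) 0)
  have hB : B ≠ 0 :=
    (ENNReal.ofReal_pos.2 (temperedBeta_pos (by linarith) (by linarith) le_rfl)).ne'
  set k : ℝ → ℝ → ℝ≥0∞ := fun s x => ENNReal.ofReal (temperedKernel ((1 + c) / 2) 0 (s - x))
  have hk : Measurable (Function.uncurry k) := by fun_prop
  have hsq (a b : ℝ≥0∞) : (a + b) ^ 2 ≤ 2 * (a ^ 2 + b ^ 2) := by
    convert ENNReal.rpow_add_le_mul_rpow_add_rpow a b one_le_two using 1 <;> norm_num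
  have hle : B * rieszEnergy c (fun s => f s + g s) ≤
      2 * (B * rieszEnergy c f + B * rieszEnergy c g) := by
    calc B * rieszEnergy c (fun s => f s + g s)
        = ∫⁻ x, ((∫⁻ s, f s * k s x) + ∫⁻ s, g s * k s x) ^ 2 := by
          rw [temperedBeta_mul_rieszEnergy (f := fun s => f s + g s) hc hc₀ (by fun_prop)]
          simp_rw [add_mul]
          exact lintegral_congr fun x => by rw [lintegral_add_left (by fun_prop)]
      _ ≤ ∫⁻ x, 2 * ((∫⁻ s, f s * k s x) ^ 2 + (∫⁻ s, g s * k s x) ^ 2) :=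
          lintegral_mono fun x => hsq _ _
      _ = 2 * (B * rieszEnergy c f + B * rieszEnergy c g) := by
          rw [lintegral_const_mul' _ _ (by simp), lintegral_add_left (by fun_prop),
            temperedBeta_mul_rieszEnergy hc hc₀ hf, temperedBeta_mul_rieszEnergy hc hc₀ hg]
  refine ENNReal.lt_top_of_mul_ne_top_right (ne_top_of_le_ne_top ?_ hle) hB
  finiteness

lemma measurable_truncRpow (hS : MeasurableSet S) (p : ℝ) : Measurable (truncRpow S p) :=
  Measurable.indicator (by fun_prop) hS

lemma truncRpow_of_mem {u : ℝ} (hu : u ∈ S) : truncRpow S p u = ENNReal.ofReal (u ^ p) :=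
  indicator_of_mem hu _

lemma lintegral_eq_mul_lintegral_comp_mul {a : ℝ} (ha : 0 < a) (hf : Measurable f) :
    ∫⁻ v, f v = ENNReal.ofReal a * ∫⁻ w, f (a * w) := by
  conv_lhs => rw [← Real.smul_map_volume_mul_left ha.ne']
  rw [lintegral_smul_measure, lintegral_map hf (by fun_prop), abs_of_pos ha, smul_eq_mul]

lemma lintegral_Ioi_rpow_mul_abs_sub_rpow (p c : ℝ) {u : ℝ} (hu : 0 < u) :
    ∫⁻ v in Ioi 0, ENNReal.ofReal (v ^ p * |u - v| ^ c) =
      ENNReal.ofReal (u ^ (p + c + 1)) *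
        ∫⁻ w in Ioi 0, ENNReal.ofReal (w ^ p * |1 - w| ^ c) := by
  have hscale (w : ℝ) (hw : 0 < w) : (u * w) ^ p * |u - u * w| ^ c =
      u ^ (p + c) * (w ^ p * |1 - w| ^ c) := by
    rw [show u - u * w = u * (1 - w) by ring, abs_mul, abs_of_pos hu, Real.mul_rpow hu.le hw.le,
      Real.mul_rpow hu.le (abs_nonneg _), Real.rpow_add hu]
    ring
  rw [← lintegral_indicator measurableSet_Ioi, lintegral_eq_mul_lintegral_comp_mul hu
      (Measurable.indicator (by fun_prop) measurableSet_Ioi),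
    ← lintegral_indicator (f := fun w => ENNReal.ofReal (w ^ p * |1 - w| ^ c)) measurableSet_Ioi,
    Real.rpow_add_one hu.ne', mul_comm _ u, ENNReal.ofReal_mul hu.le, mul_assoc,
    ← lintegral_const_mul' (ENNReal.ofReal (u ^ (p + c))) _ ENNReal.ofReal_ne_top]
  congr 1
  refine lintegral_congr fun w => ?_
  by_cases hw : 0 < w
  · rw [indicator_of_mem (mem_Ioi.2 (mul_pos hu hw)), indicator_of_mem (mem_Ioi.2 hw), hscale w hw,
      ENNReal.ofReal_mul (by positivity)]
  · rw [indicator_of_notMem (by simpa [hu] using hw), indicator_of_notMem (by simpa using hw),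
      mul_zero]

lemma rieszEnergy_truncRpow_lt_top (hS : MeasurableSet S) (hS₀ : S ⊆ Ioi 0) (hp : -1 < p)
    (hc : -1 < c) (hpc : p + c < -1) (hInt : IntegrableOn (fun u : ℝ => u ^ (2 * p + c + 1)) S) :
    rieszEnergy c (truncRpow S p) < ∞ := by
  set B := ∫⁻ w in Ioi 0, ENNReal.ofReal (w ^ p * |1 - w| ^ c)
  have hB : B < ∞ := (integrableOn_Ioi_rpow_mul_abs_one_sub_rpow hp hc hpc).setLIntegral_lt_top
  have hinner (u : ℝ) :
      ∫⁻ v, truncRpow S p u * truncRpow S p v * ENNReal.ofReal (|u - v| ^ c) ≤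
        S.indicator (fun u => ENNReal.ofReal (u ^ (2 * p + c + 1)) * B) u := by
    by_cases hu : u ∈ S
    · have hu₀ : 0 < u := hS₀ hu
      calc ∫⁻ v, truncRpow S p u * truncRpow S p v * ENNReal.ofReal (|u - v| ^ c)
          ≤ ∫⁻ v, ENNReal.ofReal (u ^ p) *
              (Ioi 0).indicator (fun v => ENNReal.ofReal (v ^ p * |u - v| ^ c)) v := by
            refine lintegral_mono fun v => ?_
            by_cases hv : v ∈ S
            · rw [truncRpow_of_mem hu, truncRpow_of_mem hv, indicator_of_mem (hS₀ hv), mul_assoc,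
                ENNReal.ofReal_mul (Real.rpow_nonneg (hS₀ hv).le p)]
            · simp [truncRpow, hv]
        _ = ENNReal.ofReal (u ^ p) * (ENNReal.ofReal (u ^ (p + c + 1)) * B) := by
            rw [lintegral_const_mul' _ _ ENNReal.ofReal_ne_top,
              lintegral_indicator measurableSet_Ioi, lintegral_Ioi_rpow_mul_abs_sub_rpow p c hu₀]
        _ = S.indicator (fun u => ENNReal.ofReal (u ^ (2 * p + c + 1)) * B) u := by
            rw [indicator_of_mem hu, ← mul_assoc, ← ENNReal.ofReal_mul (by positivity),
              ← Real.rpow_add hu₀]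
            ring_nf
    · simp [truncRpow, hu]
  calc rieszEnergy c (truncRpow S p)
      ≤ ∫⁻ u, S.indicator (fun u => ENNReal.ofReal (u ^ (2 * p + c + 1)) * B) u :=
        lintegral_mono hinner
    _ = (∫⁻ u in S, ENNReal.ofReal (u ^ (2 * p + c + 1))) * B := by
        rw [lintegral_indicator hS, lintegral_mul_const _ (by fun_prop)]
    _ < ∞ := ENNReal.mul_lt_top hInt.setLIntegral_lt_top hB

lemma rieszEnergy_truncRpow_Ioo_lt_top (hc : -1 < c) (hc₀ : c < 0) (hp : -1 - c / 2 < p) {A : ℝ}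
    (hA : 0 < A) : rieszEnergy c (truncRpow (Ioo 0 A) p) < ∞ := by
  -- Lowering `p` to a `q` in the range `(-1, -1 - c)` of `rieszEnergy_truncRpow_lt_top` only costs
  -- a constant, since `u` is bounded.
  obtain ⟨q, hq, hq'⟩ : ∃ q, -1 - c / 2 < q ∧ q < min p (-1 - c) :=
    exists_between (lt_min hp (by linarith))
  obtain ⟨hqp, hqc⟩ := lt_min_iff.1 hq'
  refine rieszEnergy_lt_top_of_le_mul (C := ENNReal.ofReal (A ^ (p - q))) ENNReal.ofReal_ne_top
    (fun u => ?_) (rieszEnergy_truncRpow_lt_top (p := q) measurableSet_Ioo Ioo_subset_Ioi_self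
      (by linarith) hc (by linarith)
      ((intervalIntegral.integrableOn_Ioo_rpow_iff hA).2 (by linarith)))
  by_cases hu : u ∈ Ioo 0 A
  · rw [truncRpow_of_mem hu, truncRpow_of_mem hu, ← ENNReal.ofReal_mul (by positivity)]
    refine ENNReal.ofReal_le_ofReal ?_
    calc u ^ p = u ^ (p - q) * u ^ q := by rw [← Real.rpow_add hu.1, sub_add_cancel]
      _ ≤ A ^ (p - q) * u ^ q := by
        have := Real.rpow_le_rpow hu.1.le hu.2.le (sub_nonneg.2 hqp.le)
        have := Real.rpow_nonneg hu.1.le q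
        gcongr
  · simp [truncRpow, hu]

lemma rieszEnergy_truncRpow_Ioi_lt_top (hc : -1 < c) (hc₀ : c < 0) (hp : p < -1 - c / 2) {A : ℝ}
    (hA : 0 < A) : rieszEnergy c (truncRpow (Ioi A) p) < ∞ := by
  obtain ⟨q, hq, hqc⟩ : ∃ q, max p (-1) < q ∧ q < -1 - c / 2 :=
    exists_between (max_lt hp (by linarith))
  obtain ⟨hpq, hq'⟩ := max_lt_iff.1 hq
  refine rieszEnergy_lt_top_of_le_mul (C := ENNReal.ofReal (A ^ (p - q))) ENNReal.ofReal_ne_top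
    (fun u => ?_) (rieszEnergy_truncRpow_lt_top (p := q) measurableSet_Ioi (Ioi_subset_Ioi hA.le)
      hq' hc (by linarith) (integrableOn_Ioi_rpow_of_lt (by linarith) hA))
  by_cases hu : u ∈ Ioi A
  · have hu₀ : 0 < u := hA.trans hu
    rw [truncRpow_of_mem hu, truncRpow_of_mem hu, ← ENNReal.ofReal_mul (by positivity)]
    refine ENNReal.ofReal_le_ofReal ?_
    calc u ^ p = u ^ (p - q) * u ^ q := by rw [← Real.rpow_add hu₀, sub_add_cancel]
      _ ≤ A ^ (p - q) * u ^ q := by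
        gcongr ?_ * _
        exact Real.rpow_le_rpow_of_nonpos hA hu.le (sub_nonpos.2 hpq.le)
  · simp [truncRpow, hu]

end RieszEnergy

section TemperedProdKernel

/-- The tensor power `x ↦ ∏ᵢ temperedKernel d lam (s - xᵢ)`, which `tHermiteFiltKernel` integrates
against `ell`. -/
noncomputable def temperedProdKernel {k : ℕ} (d lam s : ℝ) (x : Fin k → ℝ) : ℝ :=
  ∏ i, temperedKernel d lam (s - x i)

variable {k : ℕ} {d lam s r : ℝ}

lemma temperedProdKernel_nonneg (d lam s : ℝ) (x : Fin k → ℝ) :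
    0 ≤ temperedProdKernel d lam s x :=
  Finset.prod_nonneg fun _ _ => temperedKernel_nonneg ..

lemma measurable_temperedProdKernel (k : ℕ) (d lam : ℝ) :
    Measurable fun p : ℝ × (Fin k → ℝ) => temperedProdKernel d lam p.1 p.2 := by
  unfold temperedProdKernel; fun_prop

lemma temperedProdKernel_mul (d lam s r : ℝ) (x : Fin k → ℝ) :
    temperedProdKernel d lam s x * temperedProdKernel d lam r x =
      ∏ i, temperedKernel d lam (s - x i) * temperedKernel d lam (r - x i) :=
  Finset.prod_mul_distrib.symm

lemma integral_temperedProdKernel_mul (hd : d ≠ 1) (hrs : r ≠ s) :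
    ∫ x : Fin k → ℝ, temperedProdKernel d lam s x * temperedProdKernel d lam r x =
      temperedCov d lam (s - r) ^ k := by
  simp_rw [temperedProdKernel_mul]
  rw [integral_fintype_prod_volume_eq_pow fun z : ℝ =>
      temperedKernel d lam (s - z) * temperedKernel d lam (r - z),
    integral_temperedKernel_mul hd hrs, Fintype.card_fin]

lemma lintegral_temperedProdKernel_mul (hd₀ : 0 < d) (hd : d < 1 / 2) (hlam : 0 ≤ lam)
    (hrs : r ≠ s) :
    ∫⁻ x : Fin k → ℝ, ‖temperedProdKernel d lam s x‖ₑ * ‖temperedProdKernel d lam r x‖ₑ =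
      ENNReal.ofReal (temperedCov d lam (s - r) ^ k) := by
  have hInt : Integrable fun x : Fin k → ℝ =>
      temperedProdKernel d lam s x * temperedProdKernel d lam r x := by
    simp_rw [temperedProdKernel_mul]
    exact Integrable.fintype_prod fun _ => integrable_temperedKernel_mul hd₀ hd hlam hrs
  rw [← integral_temperedProdKernel_mul (by linarith) hrs, ofReal_integral_eq_lintegral_ofReal hInt
    (ae_of_all _ fun x =>
      mul_nonneg (temperedProdKernel_nonneg ..) (temperedProdKernel_nonneg ..))]
  simp only [ENNReal.ofReal_mul (temperedProdKernel_nonneg ..),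
    Real.enorm_of_nonneg (temperedProdKernel_nonneg ..)]

lemma lintegral_enorm_mul_temperedProdKernel_lt_top (hd₀ : 0 < d) (hd : d < 1 / 2) (hlam : 0 ≤ lam)
    {f : ℝ → ℝ} (hf : rieszEnergy (k * (2 * d - 1)) (fun s => ‖f s‖ₑ) < ∞) :
    ∫⁻ s, ∫⁻ r, ∫⁻ x : Fin k → ℝ, ‖f s * temperedProdKernel d lam s x‖ₑ *
      ‖f r * temperedProdKernel d lam r x‖ₑ < ∞ := by
  set c : ℝ := k * (2 * d - 1)
  set B : ℝ := temperedBeta d 0 ^ k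
  have hB : 0 ≤ B := pow_nonneg (temperedBeta_nonneg d 0) k
  have hinner {s r : ℝ} (hrs : r ≠ s) : ∫⁻ x : Fin k → ℝ, ‖f s * temperedProdKernel d lam s x‖ₑ *
      ‖f r * temperedProdKernel d lam r x‖ₑ ≤
        ENNReal.ofReal B * (‖f s‖ₑ * ‖f r‖ₑ * ENNReal.ofReal (|s - r| ^ c)) := by
    calc ∫⁻ x : Fin k → ℝ, ‖f s * temperedProdKernel d lam s x‖ₑ *
          ‖f r * temperedProdKernel d lam r x‖ₑ
        = ‖f s‖ₑ * ‖f r‖ₑ * ∫⁻ x : Fin k → ℝ,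
            ‖temperedProdKernel d lam s x‖ₑ * ‖temperedProdKernel d lam r x‖ₑ := by
          rw [← lintegral_const_mul' _ _ (by finiteness)]
          simp only [enorm_mul, mul_mul_mul_comm]
      _ ≤ ‖f s‖ₑ * ‖f r‖ₑ * ENNReal.ofReal (B * |s - r| ^ c) := by
          rw [lintegral_temperedProdKernel_mul hd₀ hd hlam hrs]
          gcongr
          exact temperedCov_pow_le k hd₀ hd hlam (s - r)
      _ = ENNReal.ofReal B * (‖f s‖ₑ * ‖f r‖ₑ * ENNReal.ofReal (|s - r| ^ c)) := by
          rw [ENNReal.ofReal_mul hB]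
          ring
  calc ∫⁻ s, ∫⁻ r, ∫⁻ x : Fin k → ℝ, ‖f s * temperedProdKernel d lam s x‖ₑ *
        ‖f r * temperedProdKernel d lam r x‖ₑ
      ≤ ∫⁻ s, ∫⁻ r, ENNReal.ofReal B * (‖f s‖ₑ * ‖f r‖ₑ * ENNReal.ofReal (|s - r| ^ c)) :=
        lintegral_mono fun s => lintegral_mono_ae <| by
          filter_upwards [(volume : Measure ℝ).ae_ne s] with r hrs using hinner hrs
    _ = ENNReal.ofReal B * rieszEnergy c (fun s => ‖f s‖ₑ) := by
        simp_rw [lintegral_const_mul' _ _ ENNReal.ofReal_ne_top, rieszEnergy]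
    _ < ∞ := ENNReal.mul_lt_top ENNReal.ofReal_lt_top hf

theorem integral_sq_integral_mul_temperedProdKernel (hd₀ : 0 < d) (hd : d < 1 / 2) (hlam : 0 ≤ lam)
    {f : ℝ → ℝ} (hfm : Measurable f) (hf : rieszEnergy (k * (2 * d - 1)) (fun s => ‖f s‖ₑ) < ∞) :
    ∫ x : Fin k → ℝ, (∫ s, f s * temperedProdKernel d lam s x) ^ 2 =
      ∫ s, ∫ r, f s * f r * temperedCov d lam (s - r) ^ k := by
  have hmeas : Measurable (Function.uncurry fun s (x : Fin k → ℝ) =>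
      f s * temperedProdKernel d lam s x) :=
    (hfm.comp measurable_fst).mul (measurable_temperedProdKernel k d lam)
  rw [integral_sq_integral hmeas (lintegral_enorm_mul_temperedProdKernel_lt_top hd₀ hd hlam hf)]
  refine integral_congr_ae <| ae_of_all _ fun s => integral_congr_ae ?_
  filter_upwards [(volume : Measure ℝ).ae_ne s] with r hrs
  simp only [mul_mul_mul_comm (f s), integral_const_mul,
    integral_temperedProdKernel_mul (show d ≠ 1 by linarith) hrs]

end TemperedProdKernel

section Ell

variable {b c p t : ℝ}

lemma measurable_ell (t b : ℝ) : Measurable (ell t b) := by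
  unfold ell; fun_prop

lemma ell_mul (ht : 0 ≤ t) (b u : ℝ) : ell t b (t * u) = t ^ b * ell 1 b u := by
  have hmax (x : ℝ) : max (t * x) 0 ^ b = t ^ b * max x 0 ^ b := by
    rw [← Real.mul_rpow ht (le_max_right x 0), mul_max_of_nonneg x 0 ht, mul_zero]
  rw [ell, ell, show t - t * u = t * (1 - u) by ring, ← mul_neg, hmax, hmax, ← mul_sub,
    mul_div_assoc]

lemma abs_add_rpow_sub_rpow_le (hb : b ≤ 1) (hp : 0 < p) (ht : 0 ≤ t) :
    |(t + p) ^ b - p ^ b| ≤ |b| * t * p ^ (b - 1) := by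
  have hderiv (x : ℝ) (hx : x ∈ Icc p (t + p)) :
      HasDerivWithinAt (fun x : ℝ => x ^ b) (b * x ^ (b - 1)) (Icc p (t + p)) x :=
    (Real.hasDerivAt_rpow_const (Or.inl (hp.trans_le hx.1).ne')).hasDerivWithinAt
  have hbound (x : ℝ) (hx : x ∈ Icc p (t + p)) : ‖b * x ^ (b - 1)‖ ≤ |b| * p ^ (b - 1) := by
    rw [norm_mul, Real.norm_eq_abs,
      Real.norm_of_nonneg (Real.rpow_nonneg (hp.trans_le hx.1).le _)]
    gcongr _ * ?_
    exact Real.rpow_le_rpow_of_nonpos hp hx.1 (by linarith)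
  have hpt : p ≤ t + p := by linarith
  have hmvt := (convex_Icc p (t + p)).norm_image_sub_le_of_norm_hasDerivWithin_le hderiv hbound
    (left_mem_Icc.2 hpt) (right_mem_Icc.2 hpt)
  rw [add_sub_cancel_right, Real.norm_eq_abs, Real.norm_of_nonneg ht] at hmvt
  linarith

lemma enorm_ell_le (hb : b ≠ 0) (hb₁ : b ≤ 1) (ht : 0 < t) (s : ℝ) :
    ‖ell t b s‖ₑ ≤ ENNReal.ofReal |b|⁻¹ * (truncRpow (Ioo 0 (3 * t)) b (t - s) +
      truncRpow (Ioo 0 (3 * t)) b (0 - s) +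
      ENNReal.ofReal (|b| * t) * truncRpow (Ioi t) (b - 1) (0 - s)) := by
  rw [ell, div_eq_inv_mul, enorm_mul, Real.enorm_eq_ofReal_abs, abs_inv, zero_sub]
  gcongr _ * ?_
  rcases le_or_gt t s with hts | _
  · rw [max_eq_right (by linarith), max_eq_right (by linarith), sub_self, enorm_zero]
    exact zero_le
  rcases lt_or_ge s (-t) with hfar | hnear
  · refine le_add_of_nonneg_of_le zero_le ?_
    rw [truncRpow_of_mem (mem_Ioi.2 (lt_neg.1 hfar)), ← ENNReal.ofReal_mul (by positivity),
      max_eq_left (by linarith), max_eq_left (by linarith), Real.enorm_eq_ofReal_abs]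
    exact ENNReal.ofReal_le_ofReal (abs_add_rpow_sub_rpow_le hb₁ (by linarith) ht.le)
  · refine le_add_of_le_of_nonneg ?_ zero_le
    calc ‖max (t - s) 0 ^ b - max (-s) 0 ^ b‖ₑ
        ≤ ‖max (t - s) 0 ^ b‖ₑ + ‖max (-s) 0 ^ b‖ₑ := enorm_sub_le
      _ ≤ truncRpow (Ioo 0 (3 * t)) b (t - s) + truncRpow (Ioo 0 (3 * t)) b (-s) := by
        have hpiece {u : ℝ} (hu : u < 3 * t) : ‖max u 0 ^ b‖ₑ ≤ truncRpow (Ioo 0 (3 * t)) b u := by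
          rcases lt_or_ge 0 u with hu₀ | hu₀
          · rw [max_eq_left hu₀.le, Real.enorm_of_nonneg (by positivity),
              truncRpow_of_mem (mem_Ioo.2 ⟨hu₀, hu⟩)]
          · rw [max_eq_right hu₀, Real.zero_rpow hb, enorm_zero]
            exact zero_le
        exact add_le_add (hpiece (by linarith)) (hpiece (by linarith))

lemma rieszEnergy_ell_lt_top (hc : -1 < c) (hc₀ : c < 0) (hb : b ≠ 0) (hb₁ : -1 - c / 2 < b)
    (hb₂ : b < -c / 2) (ht : 0 < t) : rieszEnergy c (fun s => ‖ell t b s‖ₑ) < ∞ := by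
  have hnearE (a : ℝ) : rieszEnergy c (fun s => truncRpow (Ioo 0 (3 * t)) b (a - s)) < ∞ := by
    rw [rieszEnergy_comp_sub_left]
    exact rieszEnergy_truncRpow_Ioo_lt_top hc hc₀ hb₁ (by positivity)
  have hfarE : rieszEnergy c
      (fun s => ENNReal.ofReal (|b| * t) * truncRpow (Ioi t) (b - 1) (0 - s)) < ∞ := by
    refine rieszEnergy_lt_top_of_le_mul (g := fun s => truncRpow (Ioi t) (b - 1) (0 - s))
      ENNReal.ofReal_ne_top (fun s => le_rfl) ?_
    rw [rieszEnergy_comp_sub_left]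
    exact rieszEnergy_truncRpow_Ioi_lt_top hc hc₀ (by linarith) ht
  have hnear : Measurable (truncRpow (Ioo 0 (3 * t)) b) := measurable_truncRpow measurableSet_Ioo b
  have hfar : Measurable (truncRpow (Ioi t) (b - 1)) := measurable_truncRpow measurableSet_Ioi _
  exact rieszEnergy_lt_top_of_le_mul ENNReal.ofReal_ne_top
    (enorm_ell_le hb (by linarith) ht)
    (rieszEnergy_add_lt_top hc hc₀ (by fun_prop) (by fun_prop)
      (rieszEnergy_add_lt_top hc hc₀ (by fun_prop) (by fun_prop) (hnearE t) (hnearE 0)) hfarE)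

end Ell

section Scaling

variable {t : ℝ}

lemma Phi_eq_integral_temperedCov (k : ℕ) (d b μ : ℝ) :
    Phi k d b μ = ∫ u, ∫ v, ell 1 b u * ell 1 b v * temperedCov d μ (u - v) ^ k := by
  simp only [Phi, temperedCov_pow, temperedBeta, mul_assoc]

lemma integral_integral_eq_mul_integral_integral_comp_mul (ht : 0 < t) (F : ℝ → ℝ → ℝ) :
    ∫ s, ∫ r, F s r = t ^ 2 * ∫ u, ∫ v, F (t * u) (t * v) := by
  have hscale (f : ℝ → ℝ) : ∫ s, f s = t * ∫ u, f (t * u) := by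
    rw [Measure.integral_comp_mul_left, abs_of_pos (inv_pos.2 ht), smul_eq_mul,
      mul_inv_cancel_left₀ ht.ne']
  rw [hscale]
  simp only [fun u => hscale (F (t * u)), integral_const_mul, sq, mul_assoc]

lemma integral_ell_mul_temperedCov_pow (k : ℕ) (d lam b : ℝ) (ht : 0 < t) :
    ∫ s, ∫ r, ell t b s * ell t b r * temperedCov d lam (s - r) ^ k =
      t ^ (2 * b + 2 + k * (2 * d - 1)) * Phi k d b (lam * t) := by
  have hpow : t ^ (2 * b + 2 + k * (2 * d - 1)) =
      t ^ 2 * (t ^ b * t ^ b * (t ^ (2 * d - 1)) ^ k) := by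
    rw [← Real.rpow_mul_natCast ht.le, ← Real.rpow_add ht, ← Real.rpow_add ht, ← Real.rpow_natCast,
      ← Real.rpow_add ht]
    congr 1
    push_cast
    ring
  have hintegrand (u v : ℝ) :
      ell t b (t * u) * ell t b (t * v) * temperedCov d lam (t * u - t * v) ^ k =
        t ^ b * t ^ b * (t ^ (2 * d - 1)) ^ k *
          (ell 1 b u * ell 1 b v * temperedCov d (lam * t) (u - v) ^ k) := by
    rw [ell_mul ht.le, ell_mul ht.le, ← mul_sub, temperedCov_mul ht.le, mul_pow]
    ring
  rw [integral_integral_eq_mul_integral_integral_comp_mul ht, hpow,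
    Phi_eq_integral_temperedCov]
  simp only [hintegrand, integral_const_mul, mul_assoc]

end Scaling

-- `lam = 0` is the untempered process, whose second moment is a pure power of `t`.
theorem stmt17_general {k : ℕ} (hk : 1 ≤ k) (d : ℝ) (hd₁ : 1 / 2 - 1 / (2 * (k : ℝ)) < d)
    (hd₂ : d < 1 / 2) (b : ℝ) (hb : b ≠ 0) (hb₁ : -(k : ℝ) * (d - 1) - (k : ℝ) / 2 - 1 < b)
    (hb₂ : b < -(k : ℝ) * (d - 1) - (k : ℝ) / 2) (lam : ℝ) (hlam : 0 ≤ lam) (t : ℝ) (ht : 0 < t) :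
    ∫ x : Fin k → ℝ, tHermiteFiltKernel k d lam b t x ^ 2 =
      t ^ (2 * b + 2 + (k : ℝ) * (2 * d - 1)) * Phi k d b (lam * t) := by
  have hk₁ : (1 : ℝ) ≤ k := by exact_mod_cast hk
  have hd₀ : 0 < d := by
    have : 1 / (2 * (k : ℝ)) ≤ 1 / 2 := one_div_le_one_div_of_le two_pos (by linarith)
    linarith
  have hc : -1 < (k : ℝ) * (2 * d - 1) := by
    have : (k : ℝ) * (1 / 2 - 1 / (2 * k)) = k / 2 - 1 / 2 := by field_simp
    have : (k : ℝ) * (1 / 2 - 1 / (2 * k)) < k * d := by gcongr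
    linarith
  have hc₀ : (k : ℝ) * (2 * d - 1) < 0 := mul_neg_of_pos_of_neg (by linarith) (by linarith)
  calc ∫ x : Fin k → ℝ, tHermiteFiltKernel k d lam b t x ^ 2
      = ∫ x : Fin k → ℝ, (∫ s, ell t b s * temperedProdKernel d lam s x) ^ 2 := rfl
    _ = ∫ s, ∫ r, ell t b s * ell t b r * temperedCov d lam (s - r) ^ k :=
        integral_sq_integral_mul_temperedProdKernel hd₀ hd₂ hlam (measurable_ell t b)
          (rieszEnergy_ell_lt_top hc hc₀ hb (by linarith) (by linarith) ht)
    _ = t ^ (2 * b + 2 + (k : ℝ) * (2 * d - 1)) * Phi k d b (lam * t) :=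
        integral_ell_mul_temperedCov_pow k d lam b ht

theorem stmt17 {k : ℕ} (hk : 1 ≤ k) (d : ℝ)
    (hd₁ : 1/2 - 1/(2*(k : ℝ)) < d) (hd₂ : d < 1/2)
    (b : ℝ) (hb : b ≠ 0)
    (hb₁ : -(k : ℝ) * (d - 1) - (k : ℝ) / 2 - 1 < b)
    (hb₂ : b < -(k : ℝ) * (d - 1) - (k : ℝ) / 2)
    (lam : ℝ) (hlam : 0 < lam) (t : ℝ) (ht : 0 < t) :
    (∫ x : Fin k → ℝ, (tHermiteFiltKernel k d lam b t x) ^ 2) =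
      t ^ (2 * b + 2 + (k : ℝ) * (2 * d - 1)) * Phi k d b (lam * t) :=
  stmt17_general hk d hd₁ hd₂ b hb hb₁ hb₂ lam hlam.le t ht
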